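/- arXiv:2603.09204 — 2 statements merged into one kernel-verified Lean document; each statement's English description precedes it below -/
import Mathlib

section
/- In the exact WKB setup, for any ε > 0, any sign κ ∈ {+1,−1} and any κ-transport pair (w_even, w_odd) on Ω, the associated exact WKB function v = (v₁,v₂), given by v₁ = e^{κz/ε}·H^{−1}·(w_even + w_odd) and v₂ = −κi·e^{κz/ε}·H·(w_even − w_odd), satisfies (ε/i)·v₁'(x) = g₊(x)·v₂(x) and (ε/i)·v₂'(x) = −g₋(x)·v₁(x) for all x ∈ Ω; that is, the exact WKB ansatz produces exact holomorphic solutions of the reduced Zakharov–Shabat system (ε/i)·v' = M·v with M = [[0, g₊],[−g₋, 0]]. -/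
open Complex Filter Set

noncomputable section

/-- The exact WKB setup on an open set `Ω ⊆ ℂ` free of turning points:
`g₊, g₋, φ, H, z` are holomorphic on `Ω`, `φ` and `H` nowhere vanish on `Ω`,
`φ² = −g₊·g₋`, `g₊·H² = i·φ` and `z' = i·φ`. -/
structure WKBSetup (Ω : Set ℂ) (gp gm φ Hf zf : ℂ → ℂ) : Prop where
  open_Ω : IsOpen Ω
  diff_gp : DifferentiableOn ℂ gp Ω
  diff_gm : DifferentiableOn ℂ gm Ω
  diff_φ : DifferentiableOn ℂ φ Ω
  diff_H : DifferentiableOn ℂ Hf Ω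
  diff_z : DifferentiableOn ℂ zf Ω
  φ_ne : ∀ x ∈ Ω, φ x ≠ 0
  H_ne : ∀ x ∈ Ω, Hf x ≠ 0
  φ_sq : ∀ x ∈ Ω, φ x ^ 2 = -(gp x * gm x)
  H_sq : ∀ x ∈ Ω, gp x * Hf x ^ 2 = Complex.I * φ x
  z_deriv : ∀ x ∈ Ω, deriv zf x = Complex.I * φ x

/-- A `κ`-transport pair `(w_even, w_odd)` on `Ω`:
`w_even' = (H'/H)·w_odd` and `w_odd' + κ(2/ε)·z'·w_odd = (H'/H)·w_even`. -/
def TransportPair (Ω : Set ℂ) (Hf zf : ℂ → ℂ) (ε : ℝ) (κ : ℂ)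
    (we wo : ℂ → ℂ) : Prop :=
  DifferentiableOn ℂ we Ω ∧ DifferentiableOn ℂ wo Ω ∧
  (∀ x ∈ Ω, deriv we x = deriv Hf x / Hf x * wo x) ∧
  (∀ x ∈ Ω, deriv wo x + κ * (2 / (ε : ℂ)) * deriv zf x * wo x =
    deriv Hf x / Hf x * we x)

/-- The exact WKB ansatz produces exact holomorphic solutions of the reduced
Zakharov–Shabat system: with `v₁ = e^{κz/ε}·H⁻¹·(w_even + w_odd)` and
`v₂ = −κi·e^{κz/ε}·H·(w_even − w_odd)`, one has `(ε/i)·v₁' = g₊·v₂` and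
`(ε/i)·v₂' = −g₋·v₁` on `Ω`. -/
theorem exact_wkb_solves_reduced_ZS
    (Ω : Set ℂ) (gp gm φ Hf zf : ℂ → ℂ) (hsetup : WKBSetup Ω gp gm φ Hf zf)
    (ε : ℝ) (hε : 0 < ε) (κ : ℂ) (hκ : κ = 1 ∨ κ = -1)
    (we wo : ℂ → ℂ) (hw : TransportPair Ω Hf zf ε κ we wo) :
    ∀ x ∈ Ω,
      HasDerivAt (fun y => Complex.exp (κ * zf y / ε) * (Hf y)⁻¹ * (we y + wo y))
        (Complex.I / (ε : ℂ) * (gp x *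
          (-κ * Complex.I * Complex.exp (κ * zf x / ε) * Hf x * (we x - wo x)))) x ∧
      HasDerivAt (fun y => -κ * Complex.I * Complex.exp (κ * zf y / ε) * Hf y * (we y - wo y))
        (-(Complex.I / (ε : ℂ)) * (gm x *
          (Complex.exp (κ * zf x / ε) * (Hf x)⁻¹ * (we x + wo x)))) x := by
  intro x hx
  obtain ⟨hwe, hwo, h1, h2⟩ := hw
  have hn := hsetup.open_Ω.mem_nhds hx
  have dwe := (hwe.differentiableAt hn).hasDerivAt
  have dwo := (hwo.differentiableAt hn).hasDerivAt
  have dH := (hsetup.diff_H.differentiableAt hn).hasDerivAt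
  have dz := (hsetup.diff_z.differentiableAt hn).hasDerivAt
  have hH := hsetup.H_ne x hx
  have hφ := hsetup.φ_ne x hx
  have hsq := hsetup.φ_sq x hx
  have hHsq := hsetup.H_sq x hx
  have hz := hsetup.z_deriv x hx
  have e1 := h1 x hx
  have e2 := eq_sub_of_add_eq (h2 x hx)
  have hε' : (ε : ℂ) ≠ 0 := by exact_mod_cast hε.ne'
  have hκ2 : κ ^ 2 = 1 := by rcases hκ with h | h <;> simp [h]
  have hgp : gp x ≠ 0 := by
    intro h
    rw [h] at hsq
    simp at hsq
    exact hφ hsq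
  have hzp : deriv zf x = gp x * Hf x ^ 2 := by rw [hz, hHsq]
  have hgm : gm x = Hf x ^ 2 * deriv zf x := by
    apply mul_left_cancel₀ hgp
    have : (Complex.I * φ x) ^ 2 = gp x * gm x := by
      rw [mul_pow, Complex.I_sq, hsq]; ring
    rw [hz, ← this, sq, ← hHsq]; ring
  have dE := ((dz.const_mul κ).div_const (ε : ℂ)).cexp
  constructor
  · refine ((dE.mul (dH.inv hH)).mul (dwe.add dwo)).congr_deriv ?_
    simp only [Pi.mul_apply, Pi.add_apply, Pi.inv_apply]
    rw [e1, e2, hzp]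
    generalize Complex.exp (κ * zf x / ε) = E
    field_simp
    ring_nf
    try simp only [Complex.I_sq]
    try ring
  · refine (((dE.const_mul (-κ * Complex.I)).mul dH).mul (dwe.sub dwo)).congr_deriv ?_
    simp only [Pi.mul_apply, Pi.sub_apply]
    rw [e1, e2, hgm]
    generalize Complex.exp (κ * zf x / ε) = E
    field_simp
    ring_nf
    try simp only [hκ2]
    try ring

end
end

section
/- In the exact WKB setup with Ω additionally simply connected, fix x₀, x₁ ∈ Ω and ε > 0. Let (p_even, p_odd) be the unique (+1)-transport pair with p_even(x₀) = 1 and p_odd(x₀) = 0; let (q_even, q_odd) be the unique (−1)-transport pair with q_even(x₁) = 1 and q_odd(x₁) = 0; and let (r_even, r_odd) be the unique (+1)-transport pair with r_even(x₁) = 1 and r_odd(x₁) = 0. Let v⁺, v⁻, ṽ⁺ be the exact WKB functions associated to (p_even,p_odd) with κ = +1, to (q_even,q_odd) with κ = −1, and to (r_even,r_odd) with κ = +1, respectively. Then the Wronskians are constant on Ω and satisfy, for all x ∈ Ω: v⁺₁(x)·v⁻₂(x) − v⁺₂(x)·v⁻₁(x) = 2i·p_even(x₁) and v⁺₁(x)·ṽ⁺₂(x)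 − v⁺₂(x)·ṽ⁺₁(x) = −2i·e^{2z(x₁)/ε}·p_odd(x₁). (This is the Wronskian formula for exact WKB solutions with different base points for the symbol, stated at the level of the reduced Zakharov–Shabat system.) -/
open Complex Filter Set

noncomputable section

/-- The Wronskian formulas for exact WKB solutions with different base points
for the symbol: with `v⁺` built from the `(+1)`-transport pair based at `x₀`,
`v⁻` from the `(−1)`-pair based at `x₁` and `ṽ⁺` from the `(+1)`-pair based at
`x₁`, the Wronskians are constant on `Ω` and
`W[v⁺,v⁻] = 2i·p_even(x₁)`, `W[v⁺,ṽ⁺] = −2i·e^{2z(x₁)/ε}·p_odd(x₁)`. -/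
theorem exact_wkb_wronskian_formula
    (Ω : Set ℂ) (gp gm φ Hf zf : ℂ → ℂ) (hsetup : WKBSetup Ω gp gm φ Hf zf)
    (hΩsc : SimplyConnectedSpace Ω)
    (x₀ x₁ : ℂ) (hx₀ : x₀ ∈ Ω) (hx₁ : x₁ ∈ Ω)
    (ε : ℝ) (hε : 0 < ε)
    (pe po : ℂ → ℂ) (hp : TransportPair Ω Hf zf ε 1 pe po)
    (hpe : pe x₀ = 1) (hpo : po x₀ = 0)
    (qe qo : ℂ → ℂ) (hq : TransportPair Ω Hf zf ε (-1) qe qo)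
    (hqe : qe x₁ = 1) (hqo : qo x₁ = 0)
    (re ro : ℂ → ℂ) (hr : TransportPair Ω Hf zf ε 1 re ro)
    (hre : re x₁ = 1) (hro : ro x₁ = 0) :
    ∀ x ∈ Ω,
      (Complex.exp (zf x / ε) * (Hf x)⁻¹ * (pe x + po x)) *
          (Complex.I * Complex.exp (-zf x / ε) * Hf x * (qe x - qo x)) -
        (-Complex.I * Complex.exp (zf x / ε) * Hf x * (pe x - po x)) *
          (Complex.exp (-zf x / ε) * (Hf x)⁻¹ * (qe x + qo x)) =
        2 * Complex.I * pe x₁ ∧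
      (Complex.exp (zf x / ε) * (Hf x)⁻¹ * (pe x + po x)) *
          (-Complex.I * Complex.exp (zf x / ε) * Hf x * (re x - ro x)) -
        (-Complex.I * Complex.exp (zf x / ε) * Hf x * (pe x - po x)) *
          (Complex.exp (zf x / ε) * (Hf x)⁻¹ * (re x + ro x)) =
        -2 * Complex.I * Complex.exp (2 * zf x₁ / ε) * po x₁ := by
  obtain ⟨dpe, dpo, ep, op⟩ := hp
  obtain ⟨dqe, dqo, eq, oq⟩ := hq
  obtain ⟨dre, dro, er, or'⟩ := hr
  have hO := hsetup.open_Ω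
  have hpre : IsPreconnected Ω := isPreconnected_iff_preconnectedSpace.mpr inferInstance
  have hεc : (ε : ℂ) ≠ 0 := by exact_mod_cast hε.ne'
  have hd : ∀ (f : ℂ → ℂ), DifferentiableOn ℂ f Ω → ∀ y ∈ Ω, HasDerivAt f (deriv f y) y :=
    fun f hf y hy => (hf.differentiableAt (hO.mem_nhds hy)).hasDerivAt
  have key1 : ∀ y ∈ Ω, HasDerivAt (fun x => pe x * qe x - po x * qo x) 0 y := by
    intro y hy
    have h := ((hd _ dpe y hy).mul (hd _ dqe y hy)).sub ((hd _ dpo y hy).mul (hd _ dqo y hy))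
    refine h.congr_deriv ?_
    linear_combination qe y * ep y hy + pe y * eq y hy - qo y * op y hy - po y * oq y hy
  have key2 : ∀ y ∈ Ω, HasDerivAt
      (fun x => Complex.exp (2 * zf x / ε) * (po x * re x - pe x * ro x)) 0 y := by
    intro y hy
    have h := ((((hd _ hsetup.diff_z y hy).const_mul 2).div_const (ε : ℂ)).cexp).mul
      (((hd _ dpo y hy).mul (hd _ dre y hy)).sub ((hd _ dpe y hy).mul (hd _ dro y hy)))
    refine h.congr_deriv ?_
    simp only [Pi.mul_apply, Pi.sub_apply]
    linear_combination Complex.exp (2 * zf y / ε) * (re y * op y hy + po y * er y hy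
      - ro y * ep y hy - pe y * or' y hy)
  have const : ∀ f : ℂ → ℂ, (∀ y ∈ Ω, HasDerivAt f 0 y) → ∀ x ∈ Ω, f x = f x₁ := by
    intro f hf x hx
    exact hO.is_const_of_deriv_eq_zero hpre
      (fun y hy => (hf y hy).differentiableAt.differentiableWithinAt)
      (fun y hy => (hf y hy).deriv) hx hx₁
  intro x hx
  have h1 := const _ key1 x hx
  have h2 := const _ key2 x hx
  simp only [hqe, hqo, hre, hro] at h1 h2
  have hH := hsetup.H_ne x hx
  have hHi : Hf x * (Hf x)⁻¹ = 1 := mul_inv_cancel₀ hH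
  have hE : Complex.exp (zf x / ε) * Complex.exp (-zf x / ε) = 1 := by
    rw [← Complex.exp_add, ← Complex.exp_zero]; congr 1; ring
  have hE2 : Complex.exp (2 * zf x / ε) = Complex.exp (zf x / ε) * Complex.exp (zf x / ε) := by
    rw [← Complex.exp_add]; congr 1; ring
  rw [hE2] at h2
  generalize (Hf x)⁻¹ = K at *
  generalize Complex.exp (zf x / ε) = E at *
  generalize Complex.exp (-zf x / ε) = F at *
  constructor
  · linear_combination 2 * Complex.I * h1
      + 2 * Complex.I * (pe x * qe x - po x * qo x) * (E * F * hHi + hE)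
  · linear_combination -2 * Complex.I * h2
      - 2 * Complex.I * E * E * (po x * re x - pe x * ro x) * hHi

end
end
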